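/- arXiv:2208.10907 — 4 statements merged into one kernel-verified Lean document; each statement's English description precedes it below -/
import Mathlib

section
/- Let ι be a finite index set. For each i ∈ ι let Q i and P i be real orthogonal n×n matrices ((Q i)ᵀ·(Q i) = 1 = (Q i)·(Q i)ᵀ and likewise for P i), with the columns of Q i partitioned into a redundant part Uᴿ i (first p columns) and a skeleton part Uˢ i (last r columns, p + r = n), and the rows of P i partitioned into Vᴿ i (first p rows) and Vˢ i (last r rows). Let 𝔸 be the block matrix indexed by ι × Fin n whose (i,j) block is A i j, and assume that for all i ≠ j the off-diagonal block is low-rank in the shared bases: A i j = (Uˢ i)·(S i j)·(Vˢ j) for some r×r matrix S i j. Then 𝔸 = blockDiagonal Q · Ŝ · blockDiagonal P, where Ŝ is the block matrix whose (i,i) block is (Q i)ᵀ·(A i i)·(P i)ᵀ and whose (i,j) block for i ≠ j is the sparsified block fromBlocks 0 0 0 (S i j). -/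
open Matrix

section BlockDiagonal

variable {ι κ k l m n o R : Type*} [DecidableEq ι] [DecidableEq κ]

theorem submatrix_blockDiagonal_mul [Fintype ι] [Fintype m] [NonUnitalNonAssocSemiring R]
    (Q : ι → Matrix l m R) (M : Matrix (m × ι) n R) (f : k → n) (i : ι) :
    (blockDiagonal Q * M).submatrix (·, i) f = Q i * M.submatrix (·, i) f := by
  ext a b
  simp [mul_apply, blockDiagonal_apply, Fintype.sum_prod_type, ite_mul]

theorem submatrix_mul_blockDiagonal [Fintype κ] [Fintype n] [NonUnitalNonAssocSemiring R]
    (M : Matrix m (n × κ) R) (P : κ → Matrix n o R) (f : k → m) (j : κ) :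
    (M * blockDiagonal P).submatrix f (·, j) = M.submatrix f (·, j) * P j := by
  ext a b
  simp [mul_apply, blockDiagonal_apply, Fintype.sum_prod_type, mul_ite]

theorem eq_blockDiagonal_mul_mul_blockDiagonal_iff [Fintype ι] [Fintype κ] [Fintype m] [Fintype n]
    [NonUnitalNonAssocSemiring R] {N : Matrix (l × ι) (o × κ) R} {Q : ι → Matrix l m R}
    {M : Matrix (m × ι) (n × κ) R} {P : κ → Matrix n o R} :
    N = blockDiagonal Q * M * blockDiagonal P ↔
      ∀ i j, N.submatrix (·, i) (·, j) = Q i * M.submatrix (·, i) (·, j) * P j := by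
  simp only [← submatrix_blockDiagonal_mul, ← submatrix_mul_blockDiagonal]
  refine ⟨fun h i j ↦ by rw [h], fun h ↦ ?_⟩
  ext ⟨a, i⟩ ⟨b, j⟩
  exact congr_fun₂ (h i j) a b

end BlockDiagonal

theorem mul_fromBlocks_zero_zero_zero_mul {k l m n o q R : Type*} [Fintype l] [Fintype m]
    [Fintype n] [Fintype o] [NonUnitalNonAssocSemiring R]
    (U : Matrix k (l ⊕ m) R) (S : Matrix m o R) (V : Matrix (n ⊕ o) q R) :
    U * fromBlocks (0 : Matrix l n R) 0 0 S * V = U.toCols₂ * S * V.toRows₂ := by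
  ext a b
  simp [mul_apply, Fintype.sum_sum_type]

theorem mul_mul_mul_mul_cancel_of_mul_eq_one {l m n o R : Type*} [Fintype l] [Fintype m] [Fintype n]
    [Fintype o] [DecidableEq l] [DecidableEq o] [Semiring R]
    {U : Matrix l m R} {U' : Matrix m l R} {V : Matrix n o R} {V' : Matrix o n R}
    (hU : U * U' = 1) (hV : V' * V = 1) (M : Matrix l o R) :
    U * (U' * M * V') * V = M :=
  calc
    U * (U' * M * V') * V = U * U' * M * (V' * V) := by simp only [Matrix.mul_assoc]
    _ = M := by rw [hU, hV, Matrix.one_mul, Matrix.mul_one]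

theorem blr2_usv_decomposition_general {ι l m n o s t R : Type*}
    [Fintype ι] [Fintype l] [Fintype m] [Fintype n] [Fintype o] [Fintype s] [Fintype t]
    [DecidableEq ι] [DecidableEq l] [DecidableEq o] [Semiring R]
    (Q : ι → Matrix l (m ⊕ s) R) (Q' : ι → Matrix (m ⊕ s) l R)
    (P : ι → Matrix (n ⊕ t) o R) (P' : ι → Matrix o (n ⊕ t) R)
    (hQ : ∀ i, Q i * Q' i = 1) (hP : ∀ i, P' i * P i = 1)
    (A : ι → ι → Matrix l o R) (S : ι → ι → Matrix s t R)
    (hlr : ∀ i j, i ≠ j → A i j = (Q i).toCols₂ * S i j * (P j).toRows₂)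
    (𝔸 : Matrix (l × ι) (o × ι) R) (h𝔸 : ∀ i j, 𝔸.submatrix (·, i) (·, j) = A i j)
    (Shat : Matrix ((m ⊕ s) × ι) ((n ⊕ t) × ι) R)
    (hShatDiag : ∀ i, Shat.submatrix (·, i) (·, i) = Q' i * A i i * P' i)
    (hShatOff : ∀ i j, i ≠ j → Shat.submatrix (·, i) (·, j) = fromBlocks 0 0 0 (S i j)) :
    𝔸 = blockDiagonal Q * Shat * blockDiagonal P := by
  refine eq_blockDiagonal_mul_mul_blockDiagonal_iff.mpr fun i j ↦ ?_
  rw [h𝔸]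
  obtain rfl | hij := eq_or_ne i j
  · rw [hShatDiag, mul_mul_mul_mul_cancel_of_mul_eq_one (hQ i) (hP i)]
  · rw [hShatOff i j hij, mul_fromBlocks_zero_zero_zero_mul, hlr i j hij]

/-- **USV decomposition of a BLR²/HSS matrix.**
With orthogonal shared bases `Q i` (columns split into redundant `Uᴿ i = (Q i)·inl`
and skeleton `Uˢ i = (Q i)·inr` parts) and `P i` (rows split likewise into
`Vᴿ i` and `Vˢ i`), if every off-diagonal block satisfies
`A i j = Uˢ i · S i j · Vˢ j`, then the full block matrix `𝔸` (whose `(i,j)` block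
is `A i j`) factors as `blockDiagonal Q · Ŝ · blockDiagonal P`, where the diagonal
blocks of `Ŝ` are `(Q i)ᵀ · A i i · (P i)ᵀ` and the off-diagonal blocks are the
sparsified `fromBlocks 0 0 0 (S i j)`.  Here `n = p + r` and rows/columns of each
block are indexed by `Fin p ⊕ Fin r`; Mathlib's `blockDiagonal` convention places
the block index `ι` second in the product index type. -/
theorem blr2_usv_decomposition {ι : Type*} [Fintype ι] [DecidableEq ι] {p r : ℕ}
    (Q P : ι → Matrix (Fin p ⊕ Fin r) (Fin p ⊕ Fin r) ℝ)
    (hQ₁ : ∀ i, (Q i)ᵀ * Q i = 1) (hQ₂ : ∀ i, Q i * (Q i)ᵀ = 1)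
    (hP₁ : ∀ i, (P i)ᵀ * P i = 1) (hP₂ : ∀ i, P i * (P i)ᵀ = 1)
    (A : ι → ι → Matrix (Fin p ⊕ Fin r) (Fin p ⊕ Fin r) ℝ)
    (S : ι → ι → Matrix (Fin r) (Fin r) ℝ)
    (hlr : ∀ i j, i ≠ j →
      A i j = (Q i).submatrix id Sum.inr * S i j * (P j).submatrix Sum.inr id)
    (𝔸 : Matrix ((Fin p ⊕ Fin r) × ι) ((Fin p ⊕ Fin r) × ι) ℝ)
    (h𝔸 : ∀ i j a b, 𝔸 (a, i) (b, j) = A i j a b)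
    (Shat : Matrix ((Fin p ⊕ Fin r) × ι) ((Fin p ⊕ Fin r) × ι) ℝ)
    (hShatDiag : ∀ i a b, Shat (a, i) (b, i) = ((Q i)ᵀ * A i i * (P i)ᵀ) a b)
    (hShatOff : ∀ i j, i ≠ j → ∀ a b,
      Shat (a, i) (b, j) = fromBlocks (0 : Matrix (Fin p) (Fin p) ℝ) 0 0 (S i j) a b) :
    𝔸 = blockDiagonal Q * Shat * blockDiagonal P :=
  blr2_usv_decomposition_general Q (fun i ↦ (Q i)ᵀ) P (fun i ↦ (P i)ᵀ) hQ₂ hP₁ A S hlr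
    𝔸 (fun i j ↦ Matrix.ext (h𝔸 i j)) Shat (fun i ↦ Matrix.ext (hShatDiag i))
    (fun i j hij ↦ Matrix.ext (hShatOff i j hij))
end

section
/- (Nullity theorem) Let K be a field, let A be an invertible n×n matrix over K, and let B = A⁻¹. For all subsets α, β of the index set {0,…,n−1}, the ranks of the corresponding submatrices satisfy rank(B[α, β]) + n = rank(A[βᶜ, αᶜ]) + |α| + |β|, where B[α, β] denotes the submatrix of B with rows indexed by α and columns indexed by β, and βᶜ, αᶜ denote complements in {0,…,n−1}. -/
open Matrix

/-- The submatrix of `M` with rows restricted to the finset `γ` and columns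
restricted to the finset `δ`, via the order embeddings of the finsets. -/
def finsetSubmatrix {K : Type*} {n : ℕ} (M : Matrix (Fin n) (Fin n) K)
    (γ δ : Finset (Fin n)) : Matrix (Fin γ.card) (Fin δ.card) K :=
  M.submatrix (γ.orderEmbOfFin rfl) (δ.orderEmbOfFin rfl)

/-!
Restricting a linear equivalence `e : V → W` to a block means composing it with the inclusion `ι₁`
of a coordinate subspace of `V` and a coordinate projection `π₂` of `W`. The kernel of the block
`π₂ ∘ e ∘ ι₁` is carried isomorphically by `e ∘ ι₁` onto `e (range ι₁) ∩ ker π₂`. If `range ι₁` is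
the kernel of the complementary projection `π₁` of `V`, and `ker π₂` the range of the complementary
inclusion `ι₂` into `W`, this is `range ι₂ ∩ ker (π₁ ∘ e⁻¹)`, which is the isomorphic image of the
kernel of the complementary block `π₁ ∘ e⁻¹ ∘ ι₂` of `e⁻¹`. So complementary blocks of inverse
matrices have equal nullity, and the relation between the ranks is rank-nullity.
-/

open Function Module

section KernelOfComposite

variable {R U₁ U₂ V W X₁ X₂ : Type*} [Semiring R]
  [AddCommMonoid U₁] [Module R U₁] [AddCommMonoid U₂] [Module R U₂]
  [AddCommMonoid V] [Module R V] [AddCommMonoid W] [Module R W]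
  [AddCommMonoid X₁] [Module R X₁] [AddCommMonoid X₂] [Module R X₂]

theorem finrank_ker_comp_of_injective {f : U₁ →ₗ[R] V} (hf : Injective f) (g : V →ₗ[R] X₁) :
    finrank R (g ∘ₗ f).ker = finrank R (f.range ⊓ g.ker : Submodule R V) := by
  rw [← Submodule.map_comap_eq, ← LinearMap.ker_comp]
  exact (Submodule.equivMapOfInjective f hf _).finrank_eq

theorem finrank_ker_comp_symm_eq_of_exact (e : V ≃ₗ[R] W)
    {ι₁ : U₁ →ₗ[R] V} {π₁ : V →ₗ[R] X₁} {ι₂ : U₂ →ₗ[R] W} {π₂ : W →ₗ[R] X₂}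
    (hι₁ : Injective ι₁) (hι₂ : Injective ι₂) (h₁ : Exact ι₁ π₁) (h₂ : Exact ι₂ π₂) :
    finrank R (π₁ ∘ₗ e.symm.toLinearMap ∘ₗ ι₂).ker =
      finrank R (π₂ ∘ₗ e.toLinearMap ∘ₗ ι₁).ker := by
  have hrange : (e.toLinearMap ∘ₗ ι₁).range = (π₁ ∘ₗ e.symm.toLinearMap).ker := by
    rw [LinearMap.range_comp, LinearMap.ker_comp, h₁.linearMap_ker_eq]
    exact Submodule.map_equiv_eq_comap_symm e _
  calc finrank R (π₁ ∘ₗ e.symm.toLinearMap ∘ₗ ι₂).ker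
      = finrank R (ι₂.range ⊓ (π₁ ∘ₗ e.symm.toLinearMap).ker : Submodule R W) := by
        rw [← LinearMap.comp_assoc, finrank_ker_comp_of_injective hι₂]
    _ = finrank R ((e.toLinearMap ∘ₗ ι₁).range ⊓ π₂.ker : Submodule R W) := by
        rw [hrange, h₂.linearMap_ker_eq, inf_comm]
    _ = finrank R (π₂ ∘ₗ e.toLinearMap ∘ₗ ι₁).ker :=
        (finrank_ker_comp_of_injective (f := e.toLinearMap ∘ₗ ι₁) (e.injective.comp hι₁) π₂).symm

end KernelOfComposite

section Submatrix

variable {R m n k k' l l' : Type*}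

theorem isCompl_range_coe_compl {ι : Type*} [Fintype ι] [DecidableEq ι] (s : Finset ι) :
    IsCompl (Set.range ((↑) : s → ι)) (Set.range ((↑) : ↥sᶜ → ι)) := by
  have hrange (t : Finset ι) : Set.range ((↑) : t → ι) = t := Subtype.range_coe
  rw [hrange, hrange, Finset.coe_compl]
  exact isCompl_compl

theorem exact_extendByZero_funLeft [Semiring R] {f : k → n} {f' : k' → n} (hf : Injective f)
    (h : IsCompl (Set.range f) (Set.range f')) :
    Exact (ExtendByZero.linearMap R f) (LinearMap.funLeft R R f') := by
  intro v
  constructor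
  · intro hv
    refine ⟨v ∘ f, funext fun j => ?_⟩
    by_cases hj : j ∈ Set.range f
    · obtain ⟨i, rfl⟩ := hj
      simp [hf.extend_apply]
    · obtain ⟨i, rfl⟩ : j ∈ Set.range f' := h.compl_eq ▸ hj
      simpa [extend_apply' _ _ _ hj] using (congrFun hv i).symm
  · rintro ⟨u, rfl⟩
    funext i
    exact extend_apply' _ _ _ fun hi => h.disjoint.notMem_of_mem_right ⟨i, rfl⟩ hi

theorem mulVecLin_submatrix_of_injective [CommSemiring R] [Fintype n] [Fintype k]
    (M : Matrix m n R) (g : l → m) {f : k → n} (hf : Injective f) :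
    (M.submatrix g f).mulVecLin =
      LinearMap.funLeft R R g ∘ₗ M.mulVecLin ∘ₗ ExtendByZero.linearMap R f := by
  ext1 v
  funext i
  refine Fintype.sum_of_injective f hf _ _ (fun j hj => ?_) fun j => ?_
  · simp [extend_apply' _ _ _ hj]
  · simp [hf.extend_apply]

theorem rank_add_finrank_ker_mulVecLin [CommRing R] [IsDomain R] [Fintype n] (M : Matrix m n R) :
    M.rank + finrank R M.mulVecLin.ker = Fintype.card n := by
  rw [rank, ← M.mulVecLin.quotKerEquivRange.finrank_eq, Submodule.finrank_quotient_add_finrank,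
    finrank_fintype_fun_eq_card]

variable [Fintype m] [Fintype n] [DecidableEq m] [DecidableEq n]
  {A : Matrix m n R} {B : Matrix n m R}

theorem finrank_ker_submatrix_eq_of_isCompl [CommSemiring R] [Fintype k] [Fintype l']
    (hAB : A * B = 1) (hBA : B * A = 1) {f : k → m} {f' : k' → m} {g : l → n} {g' : l' → n}
    (hf : Injective f) (hg' : Injective g') (hff' : IsCompl (Set.range f) (Set.range f'))
    (hgg' : IsCompl (Set.range g) (Set.range g')) :
    finrank R (B.submatrix g f).mulVecLin.ker = finrank R (A.submatrix f' g').mulVecLin.ker := by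
  rw [mulVecLin_submatrix_of_injective B g hf, mulVecLin_submatrix_of_injective A f' hg']
  exact finrank_ker_comp_symm_eq_of_exact (toLin'OfInv hBA hAB)
    (extend_injective hg' _) (extend_injective hf _)
    (exact_extendByZero_funLeft hg' hgg'.symm) (exact_extendByZero_funLeft hf hff')

theorem nullity_theorem_general [CommRing R] [IsDomain R] (hAB : A * B = 1) (hBA : B * A = 1)
    (α : Finset n) (β : Finset m) :
    (B.submatrix ((↑) : α → n) ((↑) : β → m)).rank + Fintype.card n =
      (A.submatrix ((↑) : ↥βᶜ → m) ((↑) : ↥αᶜ → n)).rank + α.card + β.card := by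
  have hnullity := finrank_ker_submatrix_eq_of_isCompl hAB hBA
    (f := ((↑) : β → m)) (f' := ((↑) : ↥βᶜ → m)) (g := ((↑) : α → n)) (g' := ((↑) : ↥αᶜ → n))
    Subtype.val_injective Subtype.val_injective
    (isCompl_range_coe_compl β) (isCompl_range_coe_compl α)
  have hrankB := rank_add_finrank_ker_mulVecLin (B.submatrix ((↑) : α → n) ((↑) : β → m))
  have hrankA := rank_add_finrank_ker_mulVecLin (A.submatrix ((↑) : ↥βᶜ → m) ((↑) : ↥αᶜ → n))
  have hcard := α.card_add_card_compl
  rw [Fintype.card_coe] at hrankA hrankB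
  omega

end Submatrix

theorem rank_finsetSubmatrix {K : Type*} [CommSemiring K] {n : ℕ} (M : Matrix (Fin n) (Fin n) K)
    (γ δ : Finset (Fin n)) :
    (finsetSubmatrix M γ δ).rank = (M.submatrix ((↑) : γ → Fin n) ((↑) : δ → Fin n)).rank :=
  rank_submatrix (M.submatrix ((↑) : γ → Fin n) ((↑) : δ → Fin n))
    (γ.orderIsoOfFin rfl).toEquiv (δ.orderIsoOfFin rfl).toEquiv

/-- **Fiedler–Markham nullity theorem.**
For an invertible matrix `A` with inverse `B = A⁻¹` and index subsets `α, β`,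
`rank B[α, β] + n = rank A[βᶜ, αᶜ] + |α| + |β|`. -/
theorem nullity_theorem {K : Type*} [Field K] {n : ℕ}
    (A : Matrix (Fin n) (Fin n) K) (hA : IsUnit A)
    (α β : Finset (Fin n)) :
    (finsetSubmatrix A⁻¹ α β).rank + n =
      (finsetSubmatrix A βᶜ αᶜ).rank + α.card + β.card := by
  have hdet : IsUnit A.det := (isUnit_iff_isUnit_det A).mp hA
  simpa only [rank_finsetSubmatrix, Fintype.card_fin] using
    nullity_theorem_general (mul_nonsing_inv A hdet) (nonsing_inv_mul A hdet) α β
end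

section
/- Let K be a field and let A = fromBlocks A₁₁ A₁₂ A₂₁ A₂₂ be a block matrix over K with square diagonal blocks. Suppose A = L·U where L = fromBlocks L₁₁ 0 L₂₁ L₂₂ is block lower triangular, U = fromBlocks U₁₁ U₁₂ 0 U₂₂ is block upper triangular, and the blocks L₁₁ and U₁₁ are invertible. Then rank(A₂₁) = rank(L₂₁) and rank(A₁₂) = rank(U₁₂): the off-diagonal blocks of the LU factors have exactly the same rank as the corresponding off-diagonal blocks of A. -/
open Matrix

section BlockLU

variable {R k m n p : Type*} [Fintype k] [Fintype p]

theorem fromBlocks_lower_mul_fromBlocks_upper {l o : Type*} [NonUnitalNonAssocSemiring R]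
    (L₁₁ : Matrix l k R) (L₂₁ : Matrix m k R) (L₂₂ : Matrix m p R)
    (U₁₁ : Matrix k o R) (U₁₂ : Matrix k n R) (U₂₂ : Matrix p n R) :
    fromBlocks L₁₁ 0 L₂₁ L₂₂ * fromBlocks U₁₁ U₁₂ 0 U₂₂ =
      fromBlocks (L₁₁ * U₁₁) (L₁₁ * U₁₂) (L₂₁ * U₁₁) (L₂₁ * U₁₂ + L₂₂ * U₂₂) := by
  simp only [fromBlocks_multiply, Matrix.zero_mul, Matrix.mul_zero, add_zero]

theorem lu_offdiagonal_rank_general [DecidableEq k] [Fintype n] [CommRing R]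
    {A₁₁ L₁₁ U₁₁ : Matrix k k R} {A₁₂ U₁₂ : Matrix k n R} {A₂₁ L₂₁ : Matrix m k R}
    {A₂₂ : Matrix m n R} {L₂₂ : Matrix m p R} {U₂₂ : Matrix p n R}
    (hLU : fromBlocks A₁₁ A₁₂ A₂₁ A₂₂ =
      fromBlocks L₁₁ 0 L₂₁ L₂₂ * fromBlocks U₁₁ U₁₂ 0 U₂₂)
    (hL₁₁ : L₁₁.det ∈ nonZeroDivisors R) (hU₁₁ : U₁₁.det ∈ nonZeroDivisors R) :
    A₂₁.rank = L₂₁.rank ∧ A₁₂.rank = U₁₂.rank := by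
  rw [fromBlocks_lower_mul_fromBlocks_upper, fromBlocks_inj] at hLU
  obtain ⟨-, hA₁₂ : A₁₂ = L₁₁ * U₁₂, hA₂₁ : A₂₁ = L₂₁ * U₁₁, -⟩ := hLU
  rw [hA₂₁, hA₁₂]
  exact ⟨rank_mul_eq_left_of_det_mem_nonZeroDivisors U₁₁ L₂₁ hU₁₁,
    rank_mul_eq_right_of_det_mem_nonZeroDivisors L₁₁ U₁₂ hL₁₁⟩

end BlockLU

/-- **LU factors preserve off-diagonal block ranks.**
If `A = L·U` with `L` block lower triangular, `U` block upper triangular, and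
the leading diagonal blocks `L₁₁`, `U₁₁` invertible, then
`rank A₂₁ = rank L₂₁` and `rank A₁₂ = rank U₁₂`. -/
theorem lu_offdiagonal_rank {K : Type*} [Field K] {a b : ℕ}
    (A₁₁ L₁₁ U₁₁ : Matrix (Fin a) (Fin a) K)
    (A₁₂ U₁₂ : Matrix (Fin a) (Fin b) K)
    (A₂₁ L₂₁ : Matrix (Fin b) (Fin a) K)
    (A₂₂ L₂₂ U₂₂ : Matrix (Fin b) (Fin b) K)
    (hLU : fromBlocks A₁₁ A₁₂ A₂₁ A₂₂ =
      fromBlocks L₁₁ 0 L₂₁ L₂₂ * fromBlocks U₁₁ U₁₂ 0 U₂₂)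
    (hL₁₁ : IsUnit L₁₁) (hU₁₁ : IsUnit U₁₁) :
    A₂₁.rank = L₂₁.rank ∧ A₁₂.rank = U₁₂.rank :=
  lu_offdiagonal_rank_general hLU ((isUnit_iff_isUnit_det L₁₁).mp hL₁₁).mem_nonZeroDivisors
    ((isUnit_iff_isUnit_det U₁₁).mp hU₁₁).mem_nonZeroDivisors
end

section
/- Let K be a field and let M be an invertible matrix over K indexed by Fin k ⊕ Fin m. Then the off-diagonal blocks of M⁻¹ have the same rank as the corresponding off-diagonal blocks of M: rank((M⁻¹).toBlocks₂₁) = rank(M.toBlocks₂₁) and rank((M⁻¹).toBlocks₁₂) = rank(M.toBlocks₁₂). -/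
open Matrix

/-!
If `N` inverts `M`, then `M₁₁` restricts to an isomorphism from `ker M₂₁` onto `ker N₂₁` with
inverse the restriction of `N₁₁`: for `x ∈ ker M₂₁`, the matrix `M` sends the vector `(x, 0)` to
`(M₁₁ x, 0)`, and `N` sends it back. Rank–nullity turns equality of nullities into equality of
ranks, and interchanging the two index blocks carries the lower-left block to the upper-right one.
-/

section NullityTheorem

variable {R m n p q : Type*}

theorem mulVec_sumElim_zero [NonUnitalNonAssocSemiring R] [Fintype p] [Fintype q]
    (M : Matrix (m ⊕ n) (p ⊕ q) R) (x : p → R) :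
    M *ᵥ Sum.elim x 0 = Sum.elim (M.toBlocks₁₁ *ᵥ x) (M.toBlocks₂₁ *ᵥ x) := by
  conv_lhs => rw [← fromBlocks_toBlocks M]
  simp [fromBlocks_mulVec]

theorem toBlocks_mulVec_of_mul_eq_one [Semiring R] [Fintype m] [Fintype n] [Fintype p] [Finite q]
    [DecidableEq p] [DecidableEq q] {M : Matrix (m ⊕ n) (p ⊕ q) R}
    {N : Matrix (p ⊕ q) (m ⊕ n) R} (hNM : N * M = 1) {x : p → R} (hx : M.toBlocks₂₁ *ᵥ x = 0) :
    N.toBlocks₁₁ *ᵥ (M.toBlocks₁₁ *ᵥ x) = x ∧ N.toBlocks₂₁ *ᵥ (M.toBlocks₁₁ *ᵥ x) = 0 := by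
  cases nonempty_fintype q
  rw [← Sum.elim_eq_iff]
  calc
    Sum.elim (N.toBlocks₁₁ *ᵥ (M.toBlocks₁₁ *ᵥ x)) (N.toBlocks₂₁ *ᵥ (M.toBlocks₁₁ *ᵥ x))
    _ = N *ᵥ Sum.elim (M.toBlocks₁₁ *ᵥ x) 0 := (mulVec_sumElim_zero N _).symm
    _ = N *ᵥ (M *ᵥ Sum.elim x 0) := by rw [mulVec_sumElim_zero M, hx]
    _ = Sum.elim x 0 := by rw [mulVec_mulVec, hNM, one_mulVec]

theorem rank_add_finrank_ker_mulVecLin_s9 [CommRing R] [IsDomain R] [Fintype p] (A : Matrix n p R) :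
    A.rank + Module.finrank R (LinearMap.ker A.mulVecLin) = Fintype.card p := by
  rw [Matrix.rank, ← A.mulVecLin.quotKerEquivRange.finrank_eq,
    Submodule.finrank_quotient_add_finrank, Module.finrank_fintype_fun_eq_card]

variable [Fintype m] [Fintype n] [Fintype p] [Fintype q]
  [DecidableEq m] [DecidableEq n] [DecidableEq p] [DecidableEq q]

/-- The **nullity theorem**, as an isomorphism between the kernels of the lower-left blocks of two
mutually inverse matrices. The row and column partitions may differ, so the diagonal blocks need
not be square. -/
def kerToBlocks₂₁Equiv [CommSemiring R] {M : Matrix (m ⊕ n) (p ⊕ q) R}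
    {N : Matrix (p ⊕ q) (m ⊕ n) R} (hMN : M * N = 1) (hNM : N * M = 1) :
    LinearMap.ker M.toBlocks₂₁.mulVecLin ≃ₗ[R] LinearMap.ker N.toBlocks₂₁.mulVecLin :=
  .ofLinearMap
    (M.toBlocks₁₁.mulVecLin.restrict fun _ hx ↦ (toBlocks_mulVec_of_mul_eq_one hNM hx).2)
    (N.toBlocks₁₁.mulVecLin.restrict fun _ hy ↦ (toBlocks_mulVec_of_mul_eq_one hMN hy).2)
    (LinearMap.ext fun y ↦ Subtype.ext (toBlocks_mulVec_of_mul_eq_one hMN y.2).1)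
    (LinearMap.ext fun x ↦ Subtype.ext (toBlocks_mulVec_of_mul_eq_one hNM x.2).1)

theorem rank_toBlocks₂₁_add_card_eq [CommRing R] [IsDomain R] {M : Matrix (m ⊕ n) (p ⊕ q) R}
    {N : Matrix (p ⊕ q) (m ⊕ n) R} (hMN : M * N = 1) (hNM : N * M = 1) :
    N.toBlocks₂₁.rank + Fintype.card p = M.toBlocks₂₁.rank + Fintype.card m := by
  have hM := rank_add_finrank_ker_mulVecLin_s9 M.toBlocks₂₁
  have hN := rank_add_finrank_ker_mulVecLin_s9 N.toBlocks₂₁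
  have h_nullity := (kerToBlocks₂₁Equiv hMN hNM).finrank_eq
  lia

theorem rank_toBlocks₂₁_inv [CommRing R] [IsDomain R] {M : Matrix (m ⊕ n) (m ⊕ n) R}
    (hM : IsUnit M) : M⁻¹.toBlocks₂₁.rank = M.toBlocks₂₁.rank := by
  have hdet : IsUnit M.det := (isUnit_iff_isUnit_det M).mp hM
  exact Nat.add_right_cancel
    (rank_toBlocks₂₁_add_card_eq (mul_nonsing_inv M hdet) (nonsing_inv_mul M hdet))

theorem rank_toBlocks₁₂_inv [CommRing R] [IsDomain R] {M : Matrix (m ⊕ n) (m ⊕ n) R}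
    (hM : IsUnit M) : M⁻¹.toBlocks₁₂.rank = M.toBlocks₁₂.rank := by
  let swap := Equiv.sumComm n m
  have h_swap : IsUnit (M.submatrix swap swap) := (isUnit_submatrix_equiv swap swap).mpr hM
  calc
    M⁻¹.toBlocks₁₂.rank = (M.submatrix swap swap)⁻¹.toBlocks₂₁.rank := by
      rw [inv_submatrix_equiv]; rfl
    _ = (M.submatrix swap swap).toBlocks₂₁.rank := rank_toBlocks₂₁_inv h_swap
    _ = M.toBlocks₁₂.rank := rfl

theorem inverse_offdiagonal_block_rank_general [CommRing R] [IsDomain R]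
    (M : Matrix (m ⊕ n) (m ⊕ n) R) (hM : IsUnit M) :
    M⁻¹.toBlocks₂₁.rank = M.toBlocks₂₁.rank ∧ M⁻¹.toBlocks₁₂.rank = M.toBlocks₁₂.rank :=
  ⟨rank_toBlocks₂₁_inv hM, rank_toBlocks₁₂_inv hM⟩

end NullityTheorem

/-- **Corollary of the nullity theorem.**
The inverse of an invertible `2×2` block matrix has off-diagonal blocks of the
same rank as the corresponding off-diagonal blocks of the matrix itself. -/
theorem inverse_offdiagonal_block_rank {K : Type*} [Field K] {k m : ℕ}
    (M : Matrix (Fin k ⊕ Fin m) (Fin k ⊕ Fin m) K) (hM : IsUnit M) :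
    (M⁻¹).toBlocks₂₁.rank = M.toBlocks₂₁.rank ∧
    (M⁻¹).toBlocks₁₂.rank = M.toBlocks₁₂.rank :=
  inverse_offdiagonal_block_rank_general M hM
end
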